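/- Let β ∈ (1,2) with δ(β) = (1^m 0)^∞ for some m ≥ 1, and let [t_L, t_R) ⊂ [0, 1 − 1/β) be a β-Lyndon interval. Then the subshift K̃_β(t_R) is transitive: for every finite word ε that occurs as a prefix of some element of K̃_β(t_R) and every γ ∈ K̃_β(t_R), there exists a finite word ν such that the concatenation ε ν γ belongs to K̃_β(t_R). -/

import Mathlib

open Set Filter MeasureTheory

/-- The β-transformation `x ↦ βx (mod 1)`. -/
noncomputable def Tbeta (β x : ℝ) : ℝ := Int.fract (β * x)

/-- The survivor set `K_β(t) = {x ∈ [0,1) : T_β^n x ≥ t for all n ≥ 0}`. -/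
def Kset (β t : ℝ) : Set ℝ := {x | x ∈ Set.Ico (0 : ℝ) 1 ∧ ∀ n : ℕ, t ≤ (Tbeta β)^[n] x}

/-- Strict lexicographic order on sequences of naturals. -/
def seqLt (x y : ℕ → ℕ) : Prop := ∃ n, (∀ i, i < n → x i = y i) ∧ x n < y n

/-- Lexicographic order on sequences of naturals. -/
def seqLe (x y : ℕ → ℕ) : Prop := x = y ∨ seqLt x y

/-- The `n`-th iterate of the left shift. -/
def shiftN (n : ℕ) (x : ℕ → ℕ) : ℕ → ℕ := fun i => x (i + n)

/-- The sequence `w 0^∞`. -/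
def wordSeq (w : List ℕ) : ℕ → ℕ := fun i => w.getD i 0

/-- The periodic sequence `w^∞`. -/
def perSeq (w : List ℕ) : ℕ → ℕ := fun i => w.getD (i % w.length) 0

/-- The sequence obtained by concatenating the word `w` with the sequence `x`. -/
def catSeq (w : List ℕ) (x : ℕ → ℕ) : ℕ → ℕ :=
  fun i => if i < w.length then w.getD i 0 else x (i - w.length)

/-- The greedy β-expansion of `t`: the digit `b_{i+1}` is `⌊β T_β^i t⌋`. -/
noncomputable def greedy (β t : ℝ) : ℕ → ℕ := fun i => (⌊β * (Tbeta β)^[i] t⌋).toNat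

/-- `d` is the quasi-greedy β-expansion of `1`: the lexicographically largest
sequence in `{0,1}^ℕ` not ending in `0^∞` whose digits sum to `1` in base `β`. -/
def IsQuasiGreedy (β : ℝ) (d : ℕ → ℕ) : Prop :=
  (∀ i, d i ≤ 1) ∧ (¬ ∃ N, ∀ n, N ≤ n → d n = 0) ∧
  (∑' i : ℕ, (d i : ℝ) / β ^ (i + 1) = 1) ∧
  ∀ e : ℕ → ℕ, (∀ i, e i ≤ 1) → (¬ ∃ N, ∀ n, N ≤ n → e n = 0) →
    (∑' i : ℕ, (e i : ℝ) / β ^ (i + 1) = 1) → seqLe e d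

/-- `s = s_1…s_p` is a β-Lyndon word: `s_{i+1}…s_p ≻ s_1…s_{p-i}` for `1 ≤ i < p`
and `σ^n(s^∞) ≺ δ(β)` for all `n ≥ 0`. -/
def IsBetaLyndon (β : ℝ) (s : List ℕ) : Prop :=
  s ≠ [] ∧ (∀ a ∈ s, a ≤ 1) ∧
  (∀ i, 1 ≤ i → i < s.length →
    seqLt (wordSeq (s.take (s.length - i))) (wordSeq (s.drop i))) ∧
  (∀ d : ℕ → ℕ, IsQuasiGreedy β d → ∀ n : ℕ, seqLt (shiftN n (perSeq s)) d)

/-- Left endpoint `t_L = Σ_{i=1}^p s_i β^{-i}` of the β-Lyndon interval generated by `s`. -/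
noncomputable def lyndonLeft (β : ℝ) (s : List ℕ) : ℝ :=
  ∑ i ∈ Finset.range s.length, (s.getD i 0 : ℝ) / β ^ (i + 1)

/-- Right endpoint `t_R = (β^p/(β^p - 1)) t_L` of the β-Lyndon interval generated by `s`. -/
noncomputable def lyndonRight (β : ℝ) (s : List ℕ) : ℝ :=
  β ^ s.length / (β ^ s.length - 1) * lyndonLeft β s

/-- The union of all β-Lyndon intervals `[t_L, t_R)`. -/
noncomputable def lyndonUnionIco (β : ℝ) : Set ℝ :=
  ⋃ s ∈ {s : List ℕ | IsBetaLyndon β s}, Set.Ico (lyndonLeft β s) (lyndonRight β s)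

/-- The symbolic survivor set `K̃_β(t)` with upper bound sequence `d = δ(β)`. -/
def Ktilde (β t : ℝ) (d : ℕ → ℕ) : Set (ℕ → ℕ) :=
  {x | (∀ i, x i ≤ 1) ∧ ∀ n : ℕ, seqLe (greedy β t) (shiftN n x) ∧ seqLe (shiftN n x) d}

/-- The set-valued bifurcation set `E_β`. -/
def Eset (β : ℝ) : Set ℝ :=
  {t | t ∈ Set.Ico (0 : ℝ) 1 ∧ ∀ t', t < t' → t' < 1 → Kset β t' ≠ Kset β t}

/-- The dimension bifurcation set `B_β`. -/
def Bset (β : ℝ) : Set ℝ :=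
  {t | t ∈ Set.Ico (0 : ℝ) 1 ∧ ∀ t', t < t' → t' < 1 → dimH (Kset β t') ≠ dimH (Kset β t)}

/-- `β` is a multinacci number: `β^{m+1} = β^m + ⋯ + β + 1` for some `m ≥ 1`. -/
def IsMultinacci (β : ℝ) : Prop :=
  ∃ m : ℕ, 1 ≤ m ∧ β ^ (m + 1) = ∑ i ∈ Finset.range (m + 1), β ^ i

/-!
Let `δ(β) = (1^m 0)^∞` and `0 ≤ t ≤ 1 - 1/β`, and let `c` be the greedy expansion of `t`. A binary
sequence has all its shifts below `(1^m 0)^∞` exactly when it avoids the word `1^{m+1}`, whose value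
in base `β` is `1`. Hence `c`, being the expansion of a number less than `1` like all its shifts,
avoids `1^{m+1}`, and every shift of `c` is strictly below `(1^m 0)^∞`. Moreover `c` is at most
`0 1^m 0^∞`, the expansion of `1 - 1/β`.

Given a prefix `ε` of `x ∈ K̃_β(t)` and `γ ∈ K̃_β(t)` beginning with `1^j 0`, extend `ε` to a prefix
`u` of `x` that ends in `0`. Then `u (1^m 0)^N 1^{m-j} γ` lies in `K̃_β(t)` for large `N`. The word
`1^{m+1}` does not occur in it. A shift that starts between `u` and `γ` begins with `1` or with
`0 1^m`, so it is at least `0 1^m 0^∞`. A shift that starts inside `u` agrees with a shift of `x` up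
to the end of `u`; if `c` agrees with it as well, then what follows `u` has to be compared with one
of finitely many shifts of `c`, and these are strictly below `(1^m 0)^∞`.
-/

/-- A set of sequences is transitive if every word that begins one of its elements can be joined, by
a suitable word in between, to any of its elements. -/
def IsTransitiveShift (X : Set (ℕ → ℕ)) : Prop :=
  ∀ ε : List ℕ, (∃ x ∈ X, ∀ i, i < ε.length → x i = ε.getD i 0) →
    ∀ γ ∈ X, ∃ ν : List ℕ, catSeq (ε ++ ν) γ ∈ X

/-- The binary sequences all of whose shifts lie between `c` and `d`; the set `Ktilde β t d` is the
case where `c` is the greedy expansion of `t`. -/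
def lexShift (c d : ℕ → ℕ) : Set (ℕ → ℕ) :=
  {x | (∀ i, x i ≤ 1) ∧ ∀ n, seqLe c (shiftN n x) ∧ seqLe (shiftN n x) d}

/-- The sequence `(1^m 0)^∞`, the quasi-greedy expansion of `1` in the multinacci base of
order `m`. -/
def multinacciSeq (m : ℕ) : ℕ → ℕ := perSeq (List.replicate m 1 ++ [0])

/-- The sequence has a zero in every window of length `m + 1`; for binary sequences this means
that the word `1^{m+1}` does not occur. -/
def AvoidsRun (m : ℕ) (x : ℕ → ℕ) : Prop := ∀ n, ∃ i ≤ m, x (n + i) = 0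

/-- The first `T` terms of `x`, followed by the sequence `y`. -/
def splice (T : ℕ) (x y : ℕ → ℕ) : ℕ → ℕ := fun i => if i < T then x i else y (i - T)

section Lex

variable {d x y : ℕ → ℕ}

lemma seqLe_iff_toLex_le : seqLe x y ↔ toLex x ≤ toLex y :=
  (le_iff_eq_or_lt (a := toLex x) (b := toLex y)).symm

lemma seqLe_of_not_seqLt (h : ¬ seqLt y x) : seqLe x y :=
  seqLe_iff_toLex_le.2 (le_of_not_gt (α := Lex (ℕ → ℕ)) h)

lemma seqLe_trans (hxy : seqLe x y) (hyd : seqLe y d) : seqLe x d :=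
  seqLe_iff_toLex_le.2 ((seqLe_iff_toLex_le.1 hxy).trans (seqLe_iff_toLex_le.1 hyd))

lemma seqLe_of_le (h : x ≤ y) : seqLe x y :=
  seqLe_iff_toLex_le.2 (Pi.toLex_monotone h)

lemma seqLe_of_zero_lt (h : x 0 < y 0) : seqLe x y :=
  Or.inr ⟨0, fun _ hi => absurd hi (Nat.not_lt_zero _), h⟩

lemma shiftN_shiftN (n k : ℕ) (x : ℕ → ℕ) : shiftN n (shiftN k x) = shiftN (n + k) x := by
  funext i
  simp only [shiftN, add_assoc]

end Lex

section Splice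

variable {T n i : ℕ} {c x y : ℕ → ℕ}

lemma splice_of_lt (h : i < T) : splice T x y i = x i := if_pos h

lemma splice_of_le (h : T ≤ i) : splice T x y i = y (i - T) := if_neg h.not_gt

lemma shiftN_splice_self (T : ℕ) (x y : ℕ → ℕ) : shiftN T (splice T x y) = y := by
  funext i
  simp [shiftN, splice]

lemma shiftN_splice_of_le (h : n ≤ T) :
    shiftN n (splice T x y) = splice (T - n) (shiftN n x) y := by
  funext i
  simp only [shiftN, splice, show i + n < T ↔ i < T - n by omega,
    show i + n - T = i - (T - n) by omega]

lemma shiftN_splice_of_ge (h : T ≤ n) : shiftN n (splice T x y) = shiftN (n - T) y := by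
  rw [← Nat.sub_add_cancel h, ← shiftN_shiftN, shiftN_splice_self, Nat.add_sub_cancel]

lemma splice_seqLe_splice (h : seqLe x y) : seqLe (splice T c x) (splice T c y) := by
  rcases h with rfl | ⟨k, hagree, hlt⟩
  · exact Or.inl rfl
  · refine Or.inr ⟨k + T, fun i hi => ?_, by simpa [splice] using hlt⟩
    rcases lt_or_ge i T with h | h
    · rw [splice_of_lt h, splice_of_lt h]
    · rw [splice_of_le h, splice_of_le h, hagree _ (by omega)]

lemma splice_shiftN_of_agree (h : ∀ i < T, c i = x i) : splice T x (shiftN T c) = c := by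
  funext i
  rcases lt_or_ge i T with hi | hi
  · rw [splice_of_lt hi, h i hi]
  · rw [splice_of_le hi, shiftN, Nat.sub_add_cancel hi]

lemma seqLe_splice (hx : seqLe c x) (hy : seqLe (shiftN T c) y) : seqLe c (splice T x y) := by
  have of_agree (h : ∀ i < T, c i = x i) : seqLe c (splice T x y) := by
    simpa only [splice_shiftN_of_agree h] using splice_seqLe_splice (T := T) (c := x) hy
  rcases hx with rfl | ⟨k, hagree, hlt⟩
  · exact of_agree fun _ _ => rfl
  rcases lt_or_ge k T with hk | hk
  · refine Or.inr ⟨k, fun i hi => ?_, ?_⟩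
    · rw [splice_of_lt (hi.trans hk), hagree i hi]
    · rwa [splice_of_lt hk]
  · exact of_agree fun i hi => hagree i (hi.trans_le hk)

lemma seqLe_shiftN_splice (hx : ∀ n, seqLe c (shiftN n x)) (hy : ∀ n, seqLe c (shiftN n y))
    (hcy : ∀ k ≤ T, seqLe (shiftN k c) y) (n : ℕ) : seqLe c (shiftN n (splice T x y)) := by
  rcases le_total n T with hn | hn
  · rw [shiftN_splice_of_le hn]
    exact seqLe_splice (hx n) (hcy _ (Nat.sub_le T n))
  · rw [shiftN_splice_of_ge hn]
    exact hy _

lemma exists_catSeq_append_eq {ε : List ℕ} {z : ℕ → ℕ} (hT : ε.length ≤ T)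
    (hz : ∀ i < ε.length, z i = ε.getD i 0) : ∃ ν, catSeq (ε ++ ν) (shiftN T z) = z := by
  refine ⟨(List.range (T - ε.length)).map (shiftN ε.length z), funext fun i => ?_⟩
  have hlen : (ε ++ (List.range (T - ε.length)).map (shiftN ε.length z)).length = T := by
    simpa using Nat.add_sub_of_le hT
  rw [catSeq, hlen]
  split_ifs with hiT
  · rcases lt_or_ge i ε.length with hi | hi
    · rw [List.getD_append _ _ _ _ hi, hz i hi]
    · have hrange : i - ε.length < T - ε.length := by omega
      rw [List.getD_append_right _ _ _ _ hi]
      simp [hrange, shiftN, Nat.sub_add_cancel hi]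
  · rw [shiftN, Nat.sub_add_cancel (not_lt.1 hiT)]

lemma isTransitiveShift_of_forall_exists_eq {X : Set (ℕ → ℕ)}
    (h : ∀ x ∈ X, ∀ E, ∀ γ ∈ X,
      ∃ z ∈ X, ∃ T, E ≤ T ∧ (∀ i < E, z i = x i) ∧ shiftN T z = γ) :
    IsTransitiveShift X := by
  rintro ε ⟨x, hx, hxε⟩ γ hγ
  obtain ⟨z, hz, T, hT, hzx, rfl⟩ := h x hx ε.length γ hγ
  obtain ⟨ν, hν⟩ := exists_catSeq_append_eq hT fun i hi => (hzx i hi).trans (hxε i hi)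
  exact ⟨ν, hν.symm ▸ hz⟩

end Splice

section AvoidsRun

variable {m p T : ℕ} {x y : ℕ → ℕ}

lemma multinacciSeq_apply (m i : ℕ) :
    multinacciSeq m i = if i % (m + 1) = m then 0 else 1 := by
  have hlt : i % (m + 1) < m + 1 := Nat.mod_lt _ m.succ_pos
  simp only [multinacciSeq, perSeq, List.length_append, List.length_replicate,
    List.length_singleton]
  split_ifs with h
  · rw [h, List.getD_append_right _ _ _ _ (by simp)]
    simp
  · rw [List.getD_append _ _ _ _ (by simp; omega), List.getD_replicate _ (by omega)]

lemma multinacciSeq_le_one (m i : ℕ) : multinacciSeq m i ≤ 1 := by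
  rw [multinacciSeq_apply]
  split_ifs <;> omega

lemma multinacciSeq_of_lt {i : ℕ} (h : i < m) : multinacciSeq m i = 1 := by
  rw [multinacciSeq_apply, Nat.mod_eq_of_lt (by omega), if_neg h.ne]

lemma multinacciSeq_self (m : ℕ) : multinacciSeq m m = 0 := by
  rw [multinacciSeq_apply, Nat.mod_eq_of_lt m.lt_succ_self, if_pos rfl]

lemma multinacciSeq_add_period (m i : ℕ) :
    multinacciSeq m (i + (m + 1)) = multinacciSeq m i := by
  simp only [multinacciSeq_apply, Nat.add_mod_right]

lemma exists_eq_zero_of_seqLe_multinacciSeq (h : seqLe x (multinacciSeq m)) :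
    ∃ i ≤ m, x i = 0 := by
  rcases h with rfl | ⟨k, hagree, hlt⟩
  · exact ⟨m, le_rfl, multinacciSeq_self m⟩
  rcases le_or_gt k m with hk | hk
  · exact ⟨k, hk, Nat.lt_one_iff.1 (hlt.trans_le (multinacciSeq_le_one m k))⟩
  · exact ⟨m, le_rfl, (hagree m hk).trans (multinacciSeq_self m)⟩

lemma AvoidsRun.seqLe_multinacciSeq (hx : ∀ i, x i ≤ 1) (h : AvoidsRun m x) :
    seqLe x (multinacciSeq m) := by
  refine seqLe_of_not_seqLt ?_
  rintro ⟨k, hagree, hlt⟩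
  have hxk : x k = 1 := by have := hx k; omega
  have hmod : k % (m + 1) = m := by
    by_contra hne
    rw [multinacciSeq_apply, if_neg hne] at hlt
    omega
  have hdiv : (m + 1) * (k / (m + 1)) + m = k := by
    simpa only [hmod] using Nat.div_add_mod k (m + 1)
  obtain ⟨i, hi, hzero⟩ := h ((m + 1) * (k / (m + 1)))
  rcases hi.lt_or_eq with hi | rfl
  · have hone : multinacciSeq m ((m + 1) * (k / (m + 1)) + i) = 1 := by
      rw [multinacciSeq_apply, Nat.mul_add_mod, Nat.mod_eq_of_lt (by omega), if_neg hi.ne]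
    have := hagree _ (show (m + 1) * (k / (m + 1)) + i < k by omega)
    omega
  · rw [hdiv] at hzero
    omega

lemma avoidsRun_shiftN (h : AvoidsRun m x) (n : ℕ) : AvoidsRun m (shiftN n x) := fun k => by
  obtain ⟨i, hi, hzero⟩ := h (k + n)
  exact ⟨i, hi, by rwa [shiftN, add_right_comm]⟩

lemma forall_shiftN_seqLe_multinacciSeq_iff (hx : ∀ i, x i ≤ 1) :
    (∀ n, seqLe (shiftN n x) (multinacciSeq m)) ↔ AvoidsRun m x := by
  refine ⟨fun h n => ?_, fun h n => (avoidsRun_shiftN h n).seqLe_multinacciSeq fun _ => hx _⟩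
  simpa only [shiftN, add_comm] using exists_eq_zero_of_seqLe_multinacciSeq (h n)

lemma avoidsRun_of_shiftN (h : AvoidsRun m (shiftN T x)) (hT : T ≤ m + 1)
    (hzero : x m = 0) : AvoidsRun m x := fun n => by
  rcases lt_or_ge n T with hn | hn
  · exact ⟨m - n, Nat.sub_le m n, by rwa [Nat.add_sub_of_le (by omega)]⟩
  · obtain ⟨i, hi, hxi⟩ := h (n - T)
    exact ⟨i, hi, by rwa [shiftN, show n - T + i + T = n + i by omega] at hxi⟩

lemma AvoidsRun.splice_succ (hx : AvoidsRun m x) (hy : AvoidsRun m y) (hp : x p = 0) :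
    AvoidsRun m (splice (p + 1) x y) := fun n => by
  rcases lt_or_ge p n with hn | hn
  · obtain ⟨i, hi, hyi⟩ := hy (n - (p + 1))
    exact ⟨i, hi, by rwa [splice_of_le (by omega), Nat.sub_add_comm hn]⟩
  · obtain ⟨i, hi, hxi⟩ := hx n
    rcases le_or_gt (n + i) p with hip | hip
    · exact ⟨i, hi, by rwa [splice_of_lt (by omega)]⟩
    · exact ⟨p - n, by omega, by rwa [Nat.add_sub_of_le hn, splice_of_lt p.lt_succ_self]⟩

lemma AvoidsRun.exists_leading_ones (hx : ∀ i, x i ≤ 1) (h : AvoidsRun m x) :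
    ∃ j ≤ m, x j = 0 ∧ ∀ i < j, x i = 1 := by
  classical
  obtain ⟨i, him, hi⟩ := h 0
  rw [zero_add] at hi
  have hex : ∃ j, x j = 0 := ⟨i, hi⟩
  refine ⟨Nat.find hex, (Nat.find_min' hex hi).trans him, Nat.find_spec hex, fun k hk => ?_⟩
  have := Nat.find_min hex hk
  have := hx k
  omega

end AvoidsRun

/-- The sequence `1^m 0 y`. -/
def consBlock (m : ℕ) (y : ℕ → ℕ) : ℕ → ℕ := splice (m + 1) (multinacciSeq m) y

section ConsBlock

variable {m : ℕ} {a y : ℕ → ℕ}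

lemma shiftN_iterate_consBlock (N : ℕ) (y : ℕ → ℕ) :
    shiftN (N * (m + 1)) ((consBlock m)^[N] y) = y := by
  induction N with
  | zero => simp only [zero_mul, Function.iterate_zero, id_eq]; rfl
  | succ N ih =>
    rw [Function.iterate_succ_apply', Nat.succ_mul, ← shiftN_shiftN, consBlock,
      shiftN_splice_self, ih]

lemma iterate_consBlock_of_lt {N i : ℕ} (hi : i < N) :
    (consBlock m)^[N] y i = multinacciSeq m i := by
  induction N generalizing i with
  | zero => exact absurd hi (Nat.not_lt_zero i)
  | succ N ih =>
    rw [Function.iterate_succ_apply', consBlock]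
    rcases lt_or_ge i (m + 1) with h | h
    · rw [splice_of_lt h]
    · rw [splice_of_le h, ih (by omega), ← multinacciSeq_add_period, Nat.sub_add_cancel h]

lemma eventually_seqLt_iterate_consBlock (h : seqLt a (multinacciSeq m)) (y : ℕ → ℕ) :
    ∀ᶠ N in atTop, seqLt a ((consBlock m)^[N] y) := by
  obtain ⟨k, hagree, hlt⟩ := h
  filter_upwards [eventually_gt_atTop k] with N hN
  refine ⟨k, fun i hi => ?_, ?_⟩
  · rw [iterate_consBlock_of_lt (hi.trans hN), hagree i hi]
  · rwa [iterate_consBlock_of_lt hN]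

end ConsBlock

section LexShift

variable {m : ℕ} {c x y z γ : ℕ → ℕ}

lemma mem_lexShift_multinacciSeq_iff :
    x ∈ lexShift c (multinacciSeq m) ↔
      (∀ i, x i ≤ 1) ∧ (∀ n, seqLe c (shiftN n x)) ∧ AvoidsRun m x := by
  refine and_congr_right fun hx => ?_
  rw [forall_and, forall_shiftN_seqLe_multinacciSeq_iff hx]

lemma mem_lexShift_of_shiftN_mem {T : ℕ} (hT : T ≤ m + 1) (hbin : ∀ i < T, z i ≤ 1)
    (hlow : ∀ n < T, seqLe c (shiftN n z)) (hzero : z m = 0)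
    (htail : shiftN T z ∈ lexShift c (multinacciSeq m)) :
    z ∈ lexShift c (multinacciSeq m) := by
  rw [mem_lexShift_multinacciSeq_iff] at htail ⊢
  obtain ⟨hbin', hlow', havoid⟩ := htail
  refine ⟨fun i => ?_, fun n => ?_, avoidsRun_of_shiftN havoid hT hzero⟩
  · rcases lt_or_ge i T with hi | hi
    · exact hbin i hi
    · simpa only [shiftN, Nat.sub_add_cancel hi] using hbin' (i - T)
  · rcases lt_or_ge n T with hn | hn
    · exact hlow n hn
    · simpa only [shiftN_shiftN, Nat.sub_add_cancel hn] using hlow' (n - T)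

lemma wordSeq_zero_cons_ones_succ (m i : ℕ) :
    wordSeq (0 :: List.replicate m 1) (i + 1) = if i < m then 1 else 0 := by
  rw [wordSeq, List.getD_cons_succ]
  split_ifs with hi
  · exact List.getD_replicate _ hi
  · exact List.getD_eq_default _ _ (by simpa using hi)

lemma seqLe_of_head_eq_one (hc : seqLe c (wordSeq (0 :: List.replicate m 1))) (hy : y 0 = 1) :
    seqLe c y :=
  seqLe_trans hc (seqLe_of_zero_lt (by simp [wordSeq, hy]))

lemma seqLe_of_tail_ones (hc : seqLe c (wordSeq (0 :: List.replicate m 1)))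
    (hy : ∀ i < m, y (i + 1) = 1) : seqLe c y := by
  refine seqLe_trans hc (seqLe_of_le fun i => ?_)
  cases i with
  | zero => exact Nat.zero_le _
  | succ i =>
    rw [wordSeq_zero_cons_ones_succ]
    split_ifs with hi
    exacts [(hy i hi).ge, Nat.zero_le _]

lemma splice_ones_mem_lexShift (hc : seqLe c (wordSeq (0 :: List.replicate m 1)))
    (hγ : γ ∈ lexShift c (multinacciSeq m)) {j : ℕ} (hj : j ≤ m) (hγj : γ j = 0) :
    splice (m - j) 1 γ ∈ lexShift c (multinacciSeq m) := by
  refine mem_lexShift_of_shiftN_mem (T := m - j) (by omega)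
    (fun i hi => (splice_of_lt hi).le) (fun n hn => seqLe_of_head_eq_one hc ?_) ?_ ?_
  · simp [shiftN, splice_of_lt hn]
  · rw [splice_of_le (Nat.sub_le m j), Nat.sub_sub_self hj, hγj]
  · rwa [shiftN_splice_self]

lemma splice_ones_of_lt {j : ℕ} (hones : ∀ i < j, γ i = 1) {i : ℕ} (hi : i < m) :
    splice (m - j) 1 γ i = 1 := by
  rcases lt_or_ge i (m - j) with h | h
  · rw [splice_of_lt h, Pi.one_apply]
  · rw [splice_of_le h, hones _ (by omega)]

lemma mapsTo_consBlock (hc : seqLe c (wordSeq (0 :: List.replicate m 1))) :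
    MapsTo (consBlock m) {y ∈ lexShift c (multinacciSeq m) | ∀ i < m, y i = 1}
      {y ∈ lexShift c (multinacciSeq m) | ∀ i < m, y i = 1} := by
  rintro y ⟨hy, hyones⟩
  have hones : ∀ i < m, consBlock m y i = 1 := fun i hi => by
    rw [consBlock, splice_of_lt (by omega), multinacciSeq_of_lt hi]
  refine ⟨mem_lexShift_of_shiftN_mem le_rfl (fun i hi => ?_) (fun n hn => ?_) ?_ ?_, hones⟩
  · rw [consBlock, splice_of_lt hi]
    exact multinacciSeq_le_one m i
  · rcases (Nat.lt_succ_iff.1 hn).lt_or_eq with hn | rfl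
    · exact seqLe_of_head_eq_one hc (by simpa only [shiftN, zero_add] using hones n hn)
    · refine seqLe_of_tail_ones hc fun i hi => ?_
      rw [shiftN, consBlock, splice_of_le (by omega), ← hyones i hi]
      congr 1
      omega
  · rw [consBlock, splice_of_lt m.lt_succ_self, multinacciSeq_self]
  · rwa [consBlock, shiftN_splice_self]

lemma splice_mem_lexShift {p : ℕ} (hx : x ∈ lexShift c (multinacciSeq m))
    (hy : y ∈ lexShift c (multinacciSeq m)) (hp : x p = 0)
    (hcy : ∀ k ≤ p + 1, seqLe (shiftN k c) y) :
    splice (p + 1) x y ∈ lexShift c (multinacciSeq m) := by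
  rw [mem_lexShift_multinacciSeq_iff] at hx hy ⊢
  refine ⟨fun i => ?_, seqLe_shiftN_splice hx.2.1 hy.2.1 hcy, hx.2.2.splice_succ hy.2.2 hp⟩
  unfold splice
  split_ifs
  exacts [hx.1 _, hy.1 _]

theorem isTransitiveShift_lexShift_multinacciSeq
    (hc : seqLe c (wordSeq (0 :: List.replicate m 1)))
    (hcd : ∀ k, seqLt (shiftN k c) (multinacciSeq m)) :
    IsTransitiveShift (lexShift c (multinacciSeq m)) := by
  refine isTransitiveShift_of_forall_exists_eq fun x hx E γ hγ => ?_
  obtain ⟨-, -, hxavoid⟩ := mem_lexShift_multinacciSeq_iff.1 hx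
  obtain ⟨hγbin, -, hγavoid⟩ := mem_lexShift_multinacciSeq_iff.1 hγ
  obtain ⟨i, -, hxzero⟩ := hxavoid E
  obtain ⟨j, hj, hγj, hγones⟩ := hγavoid.exists_leading_ones hγbin
  obtain ⟨N, hN⟩ := ((finite_Iic (E + i + 1)).eventually_all.2 fun k _ =>
    eventually_seqLt_iterate_consBlock (hcd k) (splice (m - j) 1 γ)).exists
  have hbridge := (mapsTo_consBlock hc).iterate N
    ⟨splice_ones_mem_lexShift hc hγ hj hγj, fun _ => splice_ones_of_lt hγones⟩
  refine ⟨splice (E + i + 1) x ((consBlock m)^[N] (splice (m - j) 1 γ)),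
    splice_mem_lexShift hx hbridge.1 hxzero fun k hk => Or.inr (hN k hk),
    m - j + (N * (m + 1) + (E + i + 1)), by omega, fun l hl => splice_of_lt (by omega), ?_⟩
  rw [← shiftN_shiftN, ← shiftN_shiftN, shiftN_splice_self, shiftN_iterate_consBlock,
    shiftN_splice_self]

end LexShift

section Greedy

variable {β t : ℝ}

lemma iterate_Tbeta_mem_Ico (ht : t ∈ Ico (0 : ℝ) 1) (n : ℕ) :
    (Tbeta β)^[n] t ∈ Ico (0 : ℝ) 1 := by
  cases n with
  | zero => exact ht
  | succ n =>
    rw [Function.iterate_succ_apply']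
    exact ⟨Int.fract_nonneg _, Int.fract_lt_one _⟩

lemma shiftN_greedy (β t : ℝ) (n : ℕ) : shiftN n (greedy β t) = greedy β ((Tbeta β)^[n] t) := by
  funext i
  simp only [shiftN, greedy, Function.iterate_add_apply]

lemma greedy_le_one (hβ : 0 < β) (hβ2 : β ≤ 2) (ht : t ∈ Ico (0 : ℝ) 1) (i : ℕ) :
    greedy β t i ≤ 1 := by
  have hlt : β * (Tbeta β)^[i] t < 2 := by
    nlinarith [(iterate_Tbeta_mem_Ico (β := β) ht i).2]
  have : ⌊β * (Tbeta β)^[i] t⌋ < 2 := Int.floor_lt.2 (by exact_mod_cast hlt)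
  rw [greedy]
  omega

lemma iterate_Tbeta_succ_eq_sub_greedy (hβ : 0 < β) (ht : t ∈ Ico (0 : ℝ) 1) (n : ℕ) :
    (Tbeta β)^[n + 1] t = β * (Tbeta β)^[n] t - greedy β t n := by
  have hfloor : 0 ≤ ⌊β * (Tbeta β)^[n] t⌋ :=
    Int.floor_nonneg.2 (mul_nonneg hβ.le (iterate_Tbeta_mem_Ico ht n).1)
  have hdigit : (greedy β t n : ℝ) = ⌊β * (Tbeta β)^[n] t⌋ := by
    exact_mod_cast Int.toNat_of_nonneg hfloor
  rw [Function.iterate_succ_apply', hdigit]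
  rfl

lemma sum_greedy_add_iterate_Tbeta (hβ : 0 < β) (ht : t ∈ Ico (0 : ℝ) 1) (n : ℕ) :
    ∑ i ∈ Finset.range n, (greedy β t i : ℝ) / β ^ (i + 1) + (Tbeta β)^[n] t / β ^ n = t := by
  induction n with
  | zero => simp
  | succ n ih =>
    have hstep : (greedy β t n : ℝ) / β ^ (n + 1) + (Tbeta β)^[n + 1] t / β ^ (n + 1) =
        (Tbeta β)^[n] t / β ^ n := by
      rw [iterate_Tbeta_succ_eq_sub_greedy hβ ht]
      field_simp
      ring
    rw [Finset.sum_range_succ, add_assoc, hstep, ih]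

lemma sum_greedy_le (hβ : 0 < β) (ht : t ∈ Ico (0 : ℝ) 1) (n : ℕ) :
    ∑ i ∈ Finset.range n, (greedy β t i : ℝ) / β ^ (i + 1) ≤ t := by
  have := div_nonneg (iterate_Tbeta_mem_Ico (β := β) ht n).1 (pow_pos hβ n).le
  linarith [sum_greedy_add_iterate_Tbeta hβ ht n]

lemma tsum_greedy_lt_one (hβ : 0 < β) (ht : t ∈ Ico (0 : ℝ) 1) :
    ∑' i, (greedy β t i : ℝ) / β ^ (i + 1) < 1 :=
  (Real.tsum_le_of_sum_range_le (fun _ => by positivity) (sum_greedy_le hβ ht)).trans_lt ht.2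

end Greedy

section Multinacci

variable {β t : ℝ} {m : ℕ}

lemma sum_one_div_pow_eq_one
    (h : ∑' i, (multinacciSeq m i : ℝ) / β ^ (i + 1) = 1) :
    ∑ i ∈ Finset.range (m + 1), 1 / β ^ (i + 1) = 1 := by
  have hsummable : Summable fun i => (multinacciSeq m i : ℝ) / β ^ (i + 1) := by
    by_contra hns
    exact zero_ne_one ((tsum_eq_zero_of_not_summable hns).symm.trans h)
  have htail : ∑' i, (multinacciSeq m (i + (m + 1)) : ℝ) / β ^ (i + (m + 1) + 1) =
      1 / β ^ (m + 1) := by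
    rw [← h, ← tsum_div_const]
    refine tsum_congr fun i => ?_
    rw [multinacciSeq_add_period, div_div, ← pow_add, add_right_comm]
  have hhead : ∑ i ∈ Finset.range m, (multinacciSeq m i : ℝ) / β ^ (i + 1) =
      ∑ i ∈ Finset.range m, 1 / β ^ (i + 1) :=
    Finset.sum_congr rfl fun i hi => by
      rw [multinacciSeq_of_lt (Finset.mem_range.1 hi), Nat.cast_one]
  have hsplit := hsummable.sum_add_tsum_nat_add (m + 1)
  rw [h, htail, Finset.sum_range_succ, hhead, multinacciSeq_self] at hsplit
  rw [Finset.sum_range_succ]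
  simpa using hsplit

lemma exists_greedy_eq_zero (hβ : 0 < β) (hβ2 : β ≤ 2) (ht : t ∈ Ico (0 : ℝ) 1)
    (hsum : ∑ i ∈ Finset.range (m + 1), 1 / β ^ (i + 1) = 1) :
    ∃ i ≤ m, greedy β t i = 0 := by
  by_contra! hne
  have hones : ∀ i ∈ Finset.range (m + 1), (1 : ℝ) / β ^ (i + 1) =
      (greedy β t i : ℝ) / β ^ (i + 1) := fun i hi => by
    have := hne i (Nat.lt_succ_iff.1 (Finset.mem_range.1 hi))
    have := greedy_le_one hβ hβ2 ht i
    rw [show greedy β t i = 1 by omega, Nat.cast_one]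
  rw [Finset.sum_congr rfl hones] at hsum
  exact absurd (sum_greedy_le hβ ht (m + 1)) (by rw [hsum]; exact ht.2.not_ge)

lemma avoidsRun_greedy (hβ : 0 < β) (hβ2 : β ≤ 2) (ht : t ∈ Ico (0 : ℝ) 1)
    (hsum : ∑ i ∈ Finset.range (m + 1), 1 / β ^ (i + 1) = 1) : AvoidsRun m (greedy β t) := by
  intro n
  simpa only [← shiftN_greedy, shiftN, add_comm n] using
    exists_greedy_eq_zero hβ hβ2 (iterate_Tbeta_mem_Ico (β := β) ht n) hsum

lemma greedy_seqLt_multinacciSeq (hβ : 0 < β) (hβ2 : β ≤ 2) (ht : t ∈ Ico (0 : ℝ) 1)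
    (h : ∑' i, (multinacciSeq m i : ℝ) / β ^ (i + 1) = 1) :
    seqLt (greedy β t) (multinacciSeq m) := by
  have havoid := avoidsRun_greedy hβ hβ2 ht (sum_one_div_pow_eq_one h)
  refine (havoid.seqLe_multinacciSeq (greedy_le_one hβ hβ2 ht)).resolve_left fun heq => ?_
  exact (tsum_greedy_lt_one hβ ht).ne (heq ▸ h)

lemma greedy_zero_eq_zero (hβ : 0 < β) (hβ2 : β < 2) (ht : t ≤ 1 - 1 / β) :
    greedy β t 0 = 0 := by
  have hβt : β * t < 1 := by
    calc β * t ≤ β * (1 - 1 / β) := by gcongr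
      _ = β - 1 := by field_simp
      _ < 1 := by linarith
  have : ⌊β * t⌋ < 1 := Int.floor_lt.2 (by exact_mod_cast hβt)
  simp only [greedy, Function.iterate_zero, id_eq]
  omega

lemma sum_wordSeq_zero_cons_ones (hsum : ∑ i ∈ Finset.range (m + 1), 1 / β ^ (i + 1) = 1) :
    ∑ i ∈ Finset.range (m + 1), (wordSeq (0 :: List.replicate m 1) i : ℝ) / β ^ (i + 1) =
      1 - 1 / β := by
  have hones : ∀ i ∈ Finset.range m,
      (wordSeq (0 :: List.replicate m 1) (i + 1) : ℝ) / β ^ (i + 1 + 1) =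
        1 / β ^ (i + 1 + 1) := fun i hi => by
    rw [wordSeq_zero_cons_ones_succ, if_pos (Finset.mem_range.1 hi), Nat.cast_one]
  rw [Finset.sum_range_succ'] at hsum ⊢
  rw [Finset.sum_congr rfl hones, eq_sub_of_add_eq hsum]
  simp [wordSeq]

lemma greedy_seqLe_wordSeq (hβ : 0 < β) (hβ2 : β < 2) (ht : t ∈ Icc 0 (1 - 1 / β))
    (hsum : ∑ i ∈ Finset.range (m + 1), 1 / β ^ (i + 1) = 1) :
    seqLe (greedy β t) (wordSeq (0 :: List.replicate m 1)) := by
  have ht1 : t ∈ Ico (0 : ℝ) 1 := Icc_subset_Ico_right (sub_lt_self 1 (by positivity)) ht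
  refine seqLe_of_not_seqLt ?_
  rintro ⟨n, hagree, hlt⟩
  have hdigit : 0 < greedy β t n := (Nat.zero_le _).trans_lt hlt
  have hmn : m + 1 ≤ n := by
    by_contra! hnm
    cases n with
    | zero => exact hdigit.ne' (greedy_zero_eq_zero hβ hβ2 ht.2)
    | succ n =>
      rw [wordSeq_zero_cons_ones_succ, if_pos (by omega)] at hlt
      exact hlt.not_ge (greedy_le_one hβ hβ2.le ht1 (n + 1))
  have hlow : t < t := by
    calc t ≤ ∑ i ∈ Finset.range (m + 1), (greedy β t i : ℝ) / β ^ (i + 1) := by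
          refine ht.2.trans_eq ((sum_wordSeq_zero_cons_ones hsum).symm.trans ?_)
          refine Finset.sum_congr rfl fun i hi => ?_
          rw [hagree i ((Finset.mem_range.1 hi).trans_le hmn)]
      _ ≤ ∑ i ∈ Finset.range n, (greedy β t i : ℝ) / β ^ (i + 1) :=
          Finset.sum_le_sum_of_subset_of_nonneg (Finset.range_subset_range.2 hmn)
            fun _ _ _ => by positivity
      _ < ∑ i ∈ Finset.range (n + 1), (greedy β t i : ℝ) / β ^ (i + 1) := by
          rw [Finset.sum_range_succ]
          exact lt_add_of_pos_right _ (by positivity)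
      _ ≤ t := sum_greedy_le hβ ht1 (n + 1)
  exact lt_irrefl t hlow

end Multinacci

lemma lyndonRight_mem_Icc {β : ℝ} {s : List ℕ} (hβ : 1 < β) (hs : s ≠ [])
    (hsub : Ico (lyndonLeft β s) (lyndonRight β s) ⊆ Ico 0 (1 - 1 / β)) :
    lyndonRight β s ∈ Icc 0 (1 - 1 / β) := by
  have hpow : 1 < β ^ s.length := one_lt_pow₀ hβ (by simpa using hs)
  have hleft : 0 ≤ lyndonLeft β s := Finset.sum_nonneg fun i _ => by positivity
  have hfactor : 1 < β ^ s.length / (β ^ s.length - 1) := by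
    rw [one_lt_div (by linarith)]
    linarith
  refine ⟨mul_nonneg (zero_le_one.trans hfactor.le) hleft, ?_⟩
  rcases hleft.eq_or_lt with hzero | hpos
  · rw [lyndonRight, ← hzero, mul_zero, sub_nonneg, div_le_one (by linarith)]
    exact hβ.le
  · exact ((Ico_subset_Ico_iff (lt_mul_of_one_lt_left hpos hfactor)).1 hsub).2

theorem stmt_6_general (β : ℝ) (hβ : β ∈ Ioo (1 : ℝ) 2) (m : ℕ)
    (hδ : IsQuasiGreedy β (perSeq (List.replicate m 1 ++ [0])))
    (t : ℝ) (ht : t ∈ Icc 0 (1 - 1 / β)) :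
    IsTransitiveShift (Ktilde β t (perSeq (List.replicate m 1 ++ [0]))) := by
  have hβ0 : 0 < β := zero_lt_one.trans hβ.1
  have htsum : ∑' i, (multinacciSeq m i : ℝ) / β ^ (i + 1) = 1 := hδ.2.2.1
  have ht1 : t ∈ Ico (0 : ℝ) 1 := Icc_subset_Ico_right (sub_lt_self 1 (by positivity)) ht
  refine isTransitiveShift_lexShift_multinacciSeq
    (greedy_seqLe_wordSeq hβ0 hβ.2 ht (sum_one_div_pow_eq_one htsum)) fun k => ?_
  rw [shiftN_greedy]
  exact greedy_seqLt_multinacciSeq hβ0 hβ.2.le (iterate_Tbeta_mem_Ico ht1 k) htsum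

/-- Let `β ∈ (1,2)` with `δ(β) = (1^m 0)^∞` for some `m ≥ 1` and let
`[t_L, t_R) ⊆ [0, 1 - 1/β)` be a β-Lyndon interval. Then `K̃_β(t_R)` is transitive:
for any word `ε` occurring as a prefix of an element of `K̃_β(t_R)` and any
`γ ∈ K̃_β(t_R)` there is a word `ν` with `ε ν γ ∈ K̃_β(t_R)`. -/
theorem stmt_6 (β : ℝ) (hβ : β ∈ Set.Ioo (1 : ℝ) 2) (m : ℕ) (hm : 1 ≤ m)
    (hδ : IsQuasiGreedy β (perSeq (List.replicate m 1 ++ [0])))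
    (s : List ℕ) (hs : IsBetaLyndon β s)
    (hsub : Set.Ico (lyndonLeft β s) (lyndonRight β s) ⊆ Set.Ico (0 : ℝ) (1 - 1 / β)) :
    ∀ ε : List ℕ,
      (∃ x ∈ Ktilde β (lyndonRight β s) (perSeq (List.replicate m 1 ++ [0])),
        ∀ i, i < ε.length → x i = ε.getD i 0) →
      ∀ γ ∈ Ktilde β (lyndonRight β s) (perSeq (List.replicate m 1 ++ [0])),
        ∃ ν : List ℕ,
          catSeq (ε ++ ν) γ ∈
            Ktilde β (lyndonRight β s) (perSeq (List.replicate m 1 ++ [0])) :=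
  stmt_6_general β hβ m hδ (lyndonRight β s) (lyndonRight_mem_Icc hβ.1 hs.1 hsub)
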